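/- Let v > 0 and σ > 0, and set p = Q(v/σ) ∈ (0, 1/2). The function h(a) = v/Q⁻¹(a), defined for a ∈ (0, 1/2), is twice differentiable at p and its second derivative there equals exp(v²/σ²)·(4π·σ³/v² − 2π·σ). -/

import Mathlib

open MeasureTheory

/-- The Gaussian tail function `Q(a) = ∫_a^∞ φ(t) dt`, where `φ` is the standard
normal density. -/
noncomputable def Qtail (a : ℝ) : ℝ :=
  ∫ t in Set.Ioi a, (1 / Real.sqrt (2 * Real.pi)) * Real.exp (-t ^ 2 / 2)

/-- The inverse of the Gaussian tail function `Q` (`Q` is a strictly decreasing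
bijection from `ℝ` onto `(0,1)`). -/
noncomputable def Qinv : ℝ → ℝ := Function.invFun Qtail

/-!
For a local inverse `r` of `f`, the chain rule gives `(g ∘ r)' = (g' / f') ∘ r`, and once more
`(g ∘ r)'' = ((g' / f')' / f') ∘ r`. The Gaussian tail has `Q' = -φ`, and `φ' = -x φ`, so that
`(g ∘ Q⁻¹)'' (Q x) = (g'' x + x g' x) / φ(x)²` with `1 / φ(x)² = 2π exp(x²)`. Apply this to
`g y = v / y` at `x = v / σ`.
-/

open ProbabilityTheory Filter Set
open scoped Topology NNReal

section LocalInverse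

variable {𝕜 F : Type*} [NontriviallyNormedField 𝕜] [CompleteSpace 𝕜] [NormedAddCommGroup F]
  [NormedSpace 𝕜 F] {f r : 𝕜 → 𝕜} {g : 𝕜 → F} {x : 𝕜}

theorem hasDerivAt_comp_local_left_inverse {f' : 𝕜} {g' : F} (hf : HasStrictDerivAt f f' x)
    (hf' : f' ≠ 0) (hr : ∀ᶠ y in 𝓝 x, r (f y) = y) (hg : HasDerivAt g g' x) :
    HasDerivAt (g ∘ r) (f'⁻¹ • g') (f x) :=
  hg.scomp_of_eq (f x) (hf.to_local_left_inverse hf' hr).hasDerivAt hr.self_of_nhds.symm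

theorem hasDerivAt_deriv_comp_local_left_inverse {f' : 𝕜 → 𝕜} {f'' : 𝕜} {g' : 𝕜 → F} {g'' : F}
    (hf : ∀ᶠ y in 𝓝 x, HasStrictDerivAt f (f' y) y) (hf' : HasDerivAt f' f'' x)
    (hx : f' x ≠ 0) (hr : ∀ᶠ y in 𝓝 x, r (f y) = y)
    (hg : ∀ᶠ y in 𝓝 x, HasDerivAt g (g' y) y) (hg' : HasDerivAt g' g'' x) :
    HasDerivAt (deriv (g ∘ r))
      ((f' x)⁻¹ • ((f' x)⁻¹ • g'' + (-f'' / f' x ^ 2) • g' x)) (f x) := by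
  have hfx : HasStrictDerivAt f (f' x) x := hf.self_of_nhds
  have deriv_eq : deriv (g ∘ r) =ᶠ[𝓝 (f x)] (fun y => (f' y)⁻¹ • g' y) ∘ r := by
    rw [← hfx.map_nhds_eq hx, EventuallyEq, eventually_map]
    filter_upwards [hf, hf'.continuousAt.eventually_ne hx, hr.eventually_nhds, hg]
      with y hfy hy hry hgy
    rw [(hasDerivAt_comp_local_left_inverse hfy hy hry hgy).deriv, Function.comp_apply,
      hry.self_of_nhds]
  exact (hasDerivAt_comp_local_left_inverse hfx hx hr
    ((hf'.fun_inv hx).fun_smul hg')).congr_of_eventuallyEq deriv_eq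

end LocalInverse

theorem hasStrictDerivAt_integral_Ioi {E : Type*} [NormedAddCommGroup E] [NormedSpace ℝ E]
    [CompleteSpace E] {f : ℝ → E} {a b : ℝ} (hab : a < b) (hint : IntegrableOn f (Ioi a))
    (hcont : ContinuousAt f b) :
    HasStrictDerivAt (fun u => ∫ t in Ioi u, f t) (-f b) b := by
  have tail_eq : (fun u => (∫ t in Ioi a, f t) - ∫ t in a..u, f t) =ᶠ[𝓝 b]
      fun u => ∫ t in Ioi u, f t := by
    filter_upwards [Ioi_mem_nhds hab] with u hu
    rw [← intervalIntegral.integral_Ioi_sub_Ioi hint (le_of_lt hu), sub_sub_cancel]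
  have hint_ab : IntervalIntegrable f volume a b :=
    (intervalIntegrable_iff_integrableOn_Ioc_of_le hab.le).2 (hint.mono_set Ioc_subset_Ioi_self)
  have hmeas : StronglyMeasurableAtFilter f (𝓝 b) :=
    ⟨Ioi a, Ioi_mem_nhds hab, hint.aestronglyMeasurable⟩
  exact ((intervalIntegral.integral_hasStrictDerivAt_right hint_ab hmeas hcont).const_sub
    _).congr_of_eventuallyEq tail_eq

section GaussianDensity

variable (μ : ℝ) (v : ℝ≥0) (x : ℝ)

theorem hasDerivAt_gaussianPDFReal :
    HasDerivAt (gaussianPDFReal μ v) (-((x - μ) / v) * gaussianPDFReal μ v x) x := by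
  have hexponent : HasDerivAt (fun y : ℝ => -(y - μ) ^ 2 / (2 * v)) (-((x - μ) / v)) x := by
    refine ((((hasDerivAt_id x).sub_const μ).fun_pow 2).fun_neg.div_const _).congr_deriv ?_
    simp only [id_eq, Nat.cast_ofNat, Nat.add_one_sub_one, pow_one, mul_one]
    ring
  rw [gaussianPDFReal_def]
  exact (hexponent.exp.const_mul _).congr_deriv (by ring)

theorem inv_gaussianPDFReal_sq :
    (gaussianPDFReal μ v x ^ 2)⁻¹ = 2 * Real.pi * v * Real.exp ((x - μ) ^ 2 / v) := by
  rw [gaussianPDFReal, mul_pow, inv_pow, Real.sq_sqrt (by positivity), mul_inv, inv_inv,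
    ← Real.exp_nat_mul, ← Real.exp_neg]
  congr 2
  push_cast
  ring

end GaussianDensity

local notation "φ" => gaussianPDFReal 0 1

theorem Qtail_eq_integral_gaussianPDFReal : Qtail = fun a => ∫ t in Ioi a, φ t := by
  ext a
  simp [Qtail, gaussianPDFReal]

theorem hasStrictDerivAt_Qtail (x : ℝ) : HasStrictDerivAt Qtail (-φ x) x := by
  rw [Qtail_eq_integral_gaussianPDFReal]
  exact hasStrictDerivAt_integral_Ioi (sub_one_lt x) (integrable_gaussianPDFReal 0 1).integrableOn
    (hasDerivAt_gaussianPDFReal 0 1 x).continuousAt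

theorem strictAnti_Qtail : StrictAnti Qtail :=
  strictAnti_of_hasDerivAt_neg (fun x => (hasStrictDerivAt_Qtail x).hasDerivAt)
    fun x => neg_lt_zero.2 (gaussianPDFReal_pos 0 1 x one_ne_zero)

theorem Qinv_Qtail (x : ℝ) : Qinv (Qtail x) = x :=
  Function.leftInverse_invFun strictAnti_Qtail.injective x

theorem hasDerivAt_deriv_comp_Qinv {F : Type*} [NormedAddCommGroup F] [NormedSpace ℝ F]
    {g g' : ℝ → F} {g'' : F} {x : ℝ} (hg : ∀ᶠ y in 𝓝 x, HasDerivAt g (g' y) y)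
    (hg' : HasDerivAt g' g'' x) :
    HasDerivAt (deriv (g ∘ Qinv)) ((2 * Real.pi * Real.exp (x ^ 2)) • (g'' + x • g' x))
      (Qtail x) := by
  have hφ : φ x ≠ 0 := (gaussianPDFReal_pos 0 1 x one_ne_zero).ne'
  have hφ_sq : (φ x ^ 2)⁻¹ = 2 * Real.pi * Real.exp (x ^ 2) := by
    simpa using inv_gaussianPDFReal_sq 0 1 x
  have hφ' : HasDerivAt (fun y => -φ y) (x * φ x) x := by
    simpa using (hasDerivAt_gaussianPDFReal 0 1 x).fun_neg
  refine (hasDerivAt_deriv_comp_local_left_inverse (.of_forall hasStrictDerivAt_Qtail) hφ'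
    (neg_ne_zero.2 hφ) (.of_forall Qinv_Qtail) hg hg').congr_deriv ?_
  rw [← hφ_sq]
  match_scalars <;> field_simp

theorem hasDerivAt_deriv_const_div_Qinv (c : ℝ) {x : ℝ} (hx : x ≠ 0) :
    HasDerivAt (deriv fun a => c / Qinv a)
      (2 * Real.pi * Real.exp (x ^ 2) * (2 * c / x ^ 3 - c / x)) (Qtail x) := by
  have hg : ∀ᶠ y in 𝓝 x, HasDerivAt (fun y => c / y) (-c / y ^ 2) y := by
    filter_upwards [eventually_ne_nhds hx] with y hy
    simpa using (hasDerivAt_const y c).fun_div (hasDerivAt_id y) hy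
  have hg' : HasDerivAt (fun y => -c / y ^ 2) (2 * c / x ^ 3) x := by
    refine ((hasDerivAt_const x (-c)).fun_div (hasDerivAt_pow 2 x)
      (pow_ne_zero 2 hx)).congr_deriv ?_
    simp only [Nat.cast_ofNat, Nat.add_one_sub_one, pow_one]
    field_simp
    ring
  refine (hasDerivAt_deriv_comp_Qinv hg hg').congr_deriv ?_
  simp only [smul_eq_mul]
  field_simp
  ring

theorem h_second_deriv_general (v σ : ℝ) (hv : v ≠ 0) (hσ : σ ≠ 0) :
    HasDerivAt (deriv (fun a => v / Qinv a))
      (Real.exp (v ^ 2 / σ ^ 2) * (4 * Real.pi * σ ^ 3 / v ^ 2 - 2 * Real.pi * σ))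
      (Qtail (v / σ)) := by
  refine (hasDerivAt_deriv_const_div_Qinv v (div_ne_zero hv hσ)).congr_deriv ?_
  rw [div_pow v σ 2]
  field_simp
  ring

/-- Let `v > 0` and `σ > 0`, and set `p = Q(v/σ) ∈ (0, 1/2)`. The
function `h(a) = v/Q⁻¹(a)` is twice differentiable at `p` and its second derivative
there equals `exp(v²/σ²)·(4π·σ³/v² − 2π·σ)`. -/
theorem h_second_deriv (v σ : ℝ) (hv : 0 < v) (hσ : 0 < σ) :
    HasDerivAt (deriv (fun a => v / Qinv a))
      (Real.exp (v ^ 2 / σ ^ 2) * (4 * Real.pi * σ ^ 3 / v ^ 2 - 2 * Real.pi * σ))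
      (Qtail (v / σ)) :=
  h_second_deriv_general v σ hv.ne' hσ.ne'
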